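/- Let Φ be a finite, reduced, irreducible, crystallographic root system with base Δ, positive roots Φ⁺, and highest root θ = Σ_{β∈Δ} m_β·β. Then for every long simple root α ∈ Δ: (i) the number of long positive roots γ with ⟨γ,α^∨⟩ = −1 equals (Σ_{β∈Δ, β long} m_β) − 1, and (ii) the number of short positive roots γ with ⟨γ,α^∨⟩ = −1 equals Σ_{β∈Δ, β short} m_β·(β,β)/(θ,θ). -/

import Mathlib

open scoped RealInnerProductSpace
open scoped Classical

noncomputable section

variable {V : Type*} [NormedAddCommGroup V] [InnerProductSpace ℝ V]

/-- The coroot pairing `⟨x, γ^∨⟩ = 2(x,γ)/(γ,γ)`. -/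
def corootPairing (x γ : V) : ℝ := 2 * ⟪x, γ⟫ / ⟪γ, γ⟫

/-- The reflection `s_γ(x) = x - ⟨x,γ^∨⟩γ` associated to a root `γ`. -/
def rootReflection (γ x : V) : V := x - corootPairing x γ • γ

/-- A finite, reduced, crystallographic root system `Φ` in a real inner product
space `V`, together with a base (set of simple roots) `Δ` and the integral
coefficients `coeff γ β` of each root `γ` on each simple root `β`. -/
structure RootSystemWithBase (V : Type*) [NormedAddCommGroup V]
    [InnerProductSpace ℝ V] : Type _ where
  /-- the set of roots -/
  Φ : Finset V
  /-- the base (set of simple roots) -/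
  Δ : Finset V
  /-- the coefficient of the root `γ` on the simple root `β` -/
  coeff : V → V → ℤ
  zero_not_mem : (0 : V) ∉ Φ
  spans : Submodule.span ℝ (Φ : Set V) = ⊤
  crystallographic : ∀ γ ∈ Φ, ∀ δ ∈ Φ, ∃ n : ℤ, corootPairing γ δ = n
  reflection_mem : ∀ γ ∈ Φ, ∀ δ ∈ Φ, rootReflection γ δ ∈ Φ
  reduced : ∀ γ ∈ Φ, ∀ c : ℝ, c • γ ∈ Φ → c = 1 ∨ c = -1
  base_subset : Δ ⊆ Φ
  base_indep : LinearIndependent ℝ (fun β : (Δ : Set V) => (β : V))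
  root_eq_sum : ∀ γ ∈ Φ, γ = ∑ β ∈ Δ, (coeff γ β : ℝ) • β
  root_sign : ∀ γ ∈ Φ, (∀ β ∈ Δ, 0 ≤ coeff γ β) ∨ (∀ β ∈ Δ, coeff γ β ≤ 0)

namespace RootSystemWithBase

variable (R : RootSystemWithBase V)

/-- The positive roots `Φ⁺` with respect to the base `Δ`. -/
def Pos : Finset V := R.Φ.filter fun γ => ∀ β ∈ R.Δ, 0 ≤ R.coeff γ β

/-- The negative roots `Φ⁻ = -Φ⁺`. -/
def Neg : Finset V := R.Pos.image fun γ => -γ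

/-- Irreducibility: `Φ` admits no decomposition into two nonempty mutually
orthogonal subsets. -/
def Irreducible : Prop :=
  ∀ S ⊆ R.Φ, (∀ γ ∈ S, ∀ δ ∈ R.Φ, δ ∉ S → ⟪γ, δ⟫ = 0) → S = ∅ ∨ S = R.Φ

/-- `θ` is the highest root: it is a root whose coefficients on the base
dominate those of every root. -/
def IsHighestRoot (θ : V) : Prop :=
  θ ∈ R.Φ ∧ ∀ γ ∈ R.Φ, ∀ β ∈ R.Δ, R.coeff γ β ≤ R.coeff θ β

end RootSystemWithBase

/-!
For a long positive root `γ` and a condition `P` on squared lengths, let `N_P(γ)` be the set of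
positive roots `δ` of squared length satisfying `P` with `⟨δ,γ^∨⟩ = -1`, and let `ht_P(γ^∨)` be the
sum of the coefficients of the coroot `γ^∨` on the simple coroots `β^∨` with `(β,β)` satisfying `P`.
If `γ` is not dominant, some simple root `β` has `⟨β,γ^∨⟩ < 0`, hence `⟨β,γ^∨⟩ = -1` because `γ` is
long. Then `s_β` maps `N_P(γ) \ {β}` bijectively onto `N_P(s_β γ)`, while `(s_β γ)^∨ = γ^∨ + β^∨`.
So `|N_P(γ)| + ht_P(γ^∨)` does not change, and climbing up to the only dominant long root `θ`, where
`N_P(θ)` is empty, gives `|N_P(γ)| = ht_P(θ^∨) - ht_P(γ^∨)`.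
-/

theorem rootReflection_eq_reflection (γ x : V) :
    rootReflection γ x = (ℝ ∙ γ)ᗮ.reflection x := by
  rw [Submodule.reflection_orthogonal_apply, Submodule.reflection_singleton_apply]
  simp only [rootReflection, corootPairing, real_inner_comm x γ, ← real_inner_self_eq_norm_sq,
    RCLike.ofReal_real_eq_id, id, neg_sub, ← Nat.cast_smul_eq_nsmul ℝ, smul_smul,
    Nat.cast_ofNat, mul_div_assoc]

theorem inner_rootReflection_rootReflection (γ x y : V) :
    ⟪rootReflection γ x, rootReflection γ y⟫ = ⟪x, y⟫ := by
  simp only [rootReflection_eq_reflection, LinearIsometryEquiv.inner_map_map]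

theorem rootReflection_rootReflection (γ x : V) :
    rootReflection γ (rootReflection γ x) = x := by
  simp only [rootReflection_eq_reflection, Submodule.reflection_reflection]

theorem rootReflection_self (γ : V) : rootReflection γ γ = -γ := by
  rw [rootReflection_eq_reflection, Submodule.reflection_orthogonalComplement_singleton_eq_neg]

theorem corootPairing_rootReflection_rootReflection (γ x y : V) :
    corootPairing (rootReflection γ x) (rootReflection γ y) = corootPairing x y := by
  simp only [corootPairing, inner_rootReflection_rootReflection]

theorem corootPairing_rootReflection_right (γ x y : V) :
    corootPairing x (rootReflection γ y) = corootPairing (rootReflection γ x) y := by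
  rw [← corootPairing_rootReflection_rootReflection γ, rootReflection_rootReflection]

theorem corootPairing_neg_left (x γ : V) : corootPairing (-x) γ = -corootPairing x γ := by
  simp only [corootPairing, inner_neg_left, mul_neg, neg_div]

theorem corootPairing_nonneg_iff {x γ : V} (hγ : 0 < ⟪γ, γ⟫) :
    0 ≤ corootPairing x γ ↔ 0 ≤ ⟪x, γ⟫ := by
  rw [corootPairing, le_div_iff₀ hγ, zero_mul, mul_nonneg_iff_of_pos_left two_pos]

theorem corootPairing_neg_iff {x γ : V} (hγ : 0 < ⟪γ, γ⟫) :
    corootPairing x γ < 0 ↔ ⟪x, γ⟫ < 0 := by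
  simpa only [not_le] using (corootPairing_nonneg_iff hγ).not

namespace RootSystemWithBase

variable {R : RootSystemWithBase V} {P : ℝ → Prop} {x γ δ β θ : V}

theorem inner_self_pos_of_mem (hγ : γ ∈ R.Φ) : 0 < ⟪γ, γ⟫ :=
  real_inner_self_pos.2 fun h => R.zero_not_mem (h ▸ hγ)

theorem coeff_eq_of_eq_sum (hγ : γ ∈ R.Φ) (c : V → ℝ) (hc : γ = ∑ β ∈ R.Δ, c β • β)
    (hβ : β ∈ R.Δ) : (R.coeff γ β : ℝ) = c β := by
  have hindep : LinearIndepOn ℝ id (R.Δ : Set V) := R.base_indep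
  refine sub_eq_zero.1 (linearIndepOn_finset_iff.1 hindep (fun β => R.coeff γ β - c β) ?_ β hβ)
  simp only [sub_smul, Finset.sum_sub_distrib, id]
  rw [← R.root_eq_sum γ hγ, ← hc, sub_self]

theorem coeff_base (hβ : β ∈ R.Δ) (hδ : δ ∈ R.Δ) : R.coeff β δ = if δ = β then 1 else 0 := by
  have h := coeff_eq_of_eq_sum (R.base_subset hβ) (fun δ => if δ = β then 1 else 0)
    (by simp [hβ]) hδ
  exact_mod_cast h

theorem sum_filter_coeff_base_mul {A : Type*} [Ring A] (hβ : β ∈ R.Δ) (p : V → Prop)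
    [DecidablePred p] (f : V → A) :
    ∑ δ ∈ R.Δ.filter p, (R.coeff β δ : A) * f δ = if p β then f β else 0 := by
  have hterm : ∀ δ ∈ R.Δ.filter p, (R.coeff β δ : A) * f δ = if δ = β then f δ else 0 := by
    intro δ hδ
    simp [coeff_base hβ (Finset.mem_filter.1 hδ).1]
  simp only [Finset.sum_congr rfl hterm, Finset.sum_ite_eq', Finset.mem_filter, hβ, true_and]

theorem sum_filter_coeff_base (hβ : β ∈ R.Δ) (p : V → Prop) [DecidablePred p] :
    ∑ δ ∈ R.Δ.filter p, R.coeff β δ = if p β then 1 else 0 := by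
  simpa only [mul_one, Int.cast_id] using sum_filter_coeff_base_mul hβ p fun _ => (1 : ℤ)

theorem coeff_rootReflection (hγ : γ ∈ R.Φ) (hβ : β ∈ R.Δ) (hδ : δ ∈ R.Δ) :
    (R.coeff (rootReflection β γ) δ : ℝ)
      = R.coeff γ δ - if δ = β then corootPairing γ β else 0 := by
  refine coeff_eq_of_eq_sum (R.reflection_mem β (R.base_subset hβ) γ hγ)
    (fun δ => R.coeff γ δ - if δ = β then corootPairing γ β else 0) ?_ hδ
  simp only [sub_smul, Finset.sum_sub_distrib, ite_smul, zero_smul, Finset.sum_ite_eq', hβ, if_true]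
  rw [← R.root_eq_sum γ hγ, rootReflection]

theorem neg_mem (hγ : γ ∈ R.Φ) : -γ ∈ R.Φ :=
  rootReflection_self γ ▸ R.reflection_mem γ hγ γ hγ

theorem coeff_neg (hγ : γ ∈ R.Φ) (hβ : β ∈ R.Δ) : R.coeff (-γ) β = -R.coeff γ β := by
  have h := coeff_eq_of_eq_sum (neg_mem hγ) (fun β => -(R.coeff γ β : ℝ))
    (by simp only [neg_smul, Finset.sum_neg_distrib, ← R.root_eq_sum γ hγ]) hβ
  exact_mod_cast h

theorem mem_Pos : γ ∈ R.Pos ↔ γ ∈ R.Φ ∧ ∀ β ∈ R.Δ, 0 ≤ R.coeff γ β :=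
  Finset.mem_filter

theorem mem_Pos_of_mem_base (hβ : β ∈ R.Δ) : β ∈ R.Pos := by
  refine mem_Pos.2 ⟨R.base_subset hβ, fun δ hδ => ?_⟩
  rw [coeff_base hβ hδ]
  split_ifs <;> norm_num

theorem exists_coeff_pos (hγ : γ ∈ R.Pos) : ∃ β ∈ R.Δ, 0 < R.coeff γ β := by
  obtain ⟨hroot, hnonneg⟩ := mem_Pos.1 hγ
  by_contra! hle
  have hzero : γ = 0 := by
    rw [R.root_eq_sum γ hroot]
    refine Finset.sum_eq_zero fun β hβ => ?_
    rw [le_antisymm (hle β hβ) (hnonneg β hβ), Int.cast_zero, zero_smul]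
  exact R.zero_not_mem (hzero ▸ hroot)

theorem neg_notMem_Pos (hγ : γ ∈ R.Pos) : -γ ∉ R.Pos := by
  intro hneg
  obtain ⟨β, hβ, hpos⟩ := exists_coeff_pos hγ
  have hnonneg := (mem_Pos.1 hneg).2 β hβ
  rw [coeff_neg (mem_Pos.1 hγ).1 hβ] at hnonneg
  omega

theorem eq_of_coeff_eq_zero (hγ : γ ∈ R.Pos) (hβ : β ∈ R.Δ)
    (hzero : ∀ δ ∈ R.Δ, δ ≠ β → R.coeff γ δ = 0) : γ = β := by
  have hroot := (mem_Pos.1 hγ).1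
  have hmul : γ = (R.coeff γ β : ℝ) • β := by
    conv_lhs => rw [R.root_eq_sum γ hroot]
    refine Finset.sum_eq_single_of_mem β hβ fun δ hδ hne => ?_
    rw [hzero δ hδ hne, Int.cast_zero, zero_smul]
  rcases R.reduced β (R.base_subset hβ) _ (hmul ▸ hroot) with hone | hneg_one
  · rw [hmul, hone, one_smul]
  · rw [hneg_one, neg_one_smul] at hmul
    exact absurd (hmul ▸ hγ) (neg_notMem_Pos (mem_Pos_of_mem_base hβ))

theorem rootReflection_mem_Pos (hβ : β ∈ R.Δ) (hγ : γ ∈ R.Pos) (hne : γ ≠ β) :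
    rootReflection β γ ∈ R.Pos := by
  obtain ⟨hroot, hnonneg⟩ := mem_Pos.1 hγ
  have hrefl := R.reflection_mem β (R.base_subset hβ) γ hroot
  obtain ⟨δ, hδ, hδβ, hcoeff⟩ : ∃ δ ∈ R.Δ, δ ≠ β ∧ R.coeff γ δ ≠ 0 := by
    by_contra! hzero
    exact hne (eq_of_coeff_eq_zero hγ hβ hzero)
  have hsame : R.coeff (rootReflection β γ) δ = R.coeff γ δ := by
    have h := coeff_rootReflection hroot hβ hδ
    rw [if_neg hδβ, sub_zero] at h
    exact_mod_cast h
  refine mem_Pos.2 ⟨hrefl, (R.root_sign _ hrefl).resolve_right fun hnonpos => hcoeff ?_⟩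
  exact le_antisymm (hsame ▸ hnonpos δ hδ) (hnonneg δ hδ)

/-- Membership in the closed dominant Weyl chamber: `x` has nonnegative inner product with every
simple root. -/
def IsDominant (R : RootSystemWithBase V) (x : V) : Prop :=
  ∀ β ∈ R.Δ, 0 ≤ ⟪x, β⟫

theorem IsDominant.inner_le_inner (hx : R.IsDominant x) (hγ : γ ∈ R.Φ) (hδ : δ ∈ R.Φ)
    (hle : ∀ β ∈ R.Δ, R.coeff γ β ≤ R.coeff δ β) : ⟪x, γ⟫ ≤ ⟪x, δ⟫ := by
  rw [R.root_eq_sum γ hγ, R.root_eq_sum δ hδ]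
  simp only [inner_sum, inner_smul_right]
  gcongr with β hβ
  · exact hx β hβ
  · exact hle β hβ

theorem IsDominant.inner_nonneg (hx : R.IsDominant x) (hγ : γ ∈ R.Pos) : 0 ≤ ⟪x, γ⟫ := by
  obtain ⟨hroot, hnonneg⟩ := mem_Pos.1 hγ
  rw [R.root_eq_sum γ hroot, inner_sum]
  refine Finset.sum_nonneg fun β hβ => ?_
  rw [inner_smul_right]
  exact mul_nonneg (Int.cast_nonneg (hnonneg β hβ)) (hx β hβ)

/-- The sum `ht_P(γ^∨)` of the coefficients of the coroot `γ^∨` on the simple coroots `β^∨` for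
which the squared length of `β` satisfies `P`. Since `γ^∨ = 2γ/(γ,γ)`, the coefficient of `γ^∨` on
`β^∨` is that of `γ` on `β`, times `(β,β)/(γ,γ)`. -/
def corootHeight (R : RootSystemWithBase V) (P : ℝ → Prop) (γ : V) : ℝ :=
  ∑ β ∈ R.Δ.filter fun β => P ⟪β, β⟫, (R.coeff γ β : ℝ) * (⟪β, β⟫ / ⟪γ, γ⟫)

theorem corootHeight_rootReflection (P : ℝ → Prop) (hγ : γ ∈ R.Φ) (hβ : β ∈ R.Δ) :
    R.corootHeight P (rootReflection β γ)
      = R.corootHeight P γ - if P ⟪β, β⟫ then corootPairing β γ else 0 := by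
  have hββ := (inner_self_pos_of_mem (R.base_subset hβ)).ne'
  have hswap : corootPairing γ β * (⟪β, β⟫ / ⟪γ, γ⟫) = corootPairing β γ := by
    rw [corootPairing, corootPairing, real_inner_comm γ β]
    field_simp
  have hterm : ∀ δ ∈ R.Δ.filter fun δ => P ⟪δ, δ⟫,
      (R.coeff (rootReflection β γ) δ : ℝ) * (⟪δ, δ⟫ / ⟪γ, γ⟫)
        = R.coeff γ δ * (⟪δ, δ⟫ / ⟪γ, γ⟫) - if δ = β then corootPairing β γ else 0 := by
    intro δ hδ
    rw [coeff_rootReflection hγ hβ (Finset.mem_filter.1 hδ).1]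
    split_ifs with h
    · rw [h, sub_mul, hswap]
    · rw [sub_zero, sub_zero]
  rw [corootHeight, inner_rootReflection_rootReflection, Finset.sum_congr rfl hterm,
    Finset.sum_sub_distrib, Finset.sum_ite_eq', corootHeight]
  simp only [Finset.mem_filter, hβ, true_and]

theorem corootHeight_lt_corootHeight_rootReflection (hγ : γ ∈ R.Φ) (hβ : β ∈ R.Δ)
    (hneg : ⟪γ, β⟫ < 0) :
    R.corootHeight (fun _ => True) γ < R.corootHeight (fun _ => True) (rootReflection β γ) := by
  rw [corootHeight_rootReflection _ hγ hβ, if_pos trivial]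
  rw [real_inner_comm, ← corootPairing_neg_iff (inner_self_pos_of_mem hγ)] at hneg
  linarith

theorem dominant_induction {motive : ∀ γ, γ ∈ R.Φ → Prop}
    (dominant : ∀ γ (hγ : γ ∈ R.Φ), R.IsDominant γ → motive γ hγ)
    (reflect : ∀ γ (hγ : γ ∈ R.Φ) β (hβ : β ∈ R.Δ), ⟪γ, β⟫ < 0 →
      motive (rootReflection β γ) (R.reflection_mem β (R.base_subset hβ) γ hγ) → motive γ hγ)
    (γ : V) (hγ : γ ∈ R.Φ) : motive γ hγ := by
  by_contra hbad
  obtain ⟨δ, hδ, hmax⟩ := (R.Φ.filter fun γ => ∃ hγ : γ ∈ R.Φ, ¬ motive γ hγ).exists_max_image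
    (R.corootHeight fun _ => True) ⟨γ, Finset.mem_filter.2 ⟨hγ, hγ, hbad⟩⟩
  obtain ⟨-, hroot, hnot⟩ := Finset.mem_filter.1 hδ
  obtain ⟨β, hβ, hneg⟩ : ∃ β ∈ R.Δ, ⟪δ, β⟫ < 0 := by
    by_contra! hdom
    exact hnot (dominant δ hroot hdom)
  have hmem := R.reflection_mem β (R.base_subset hβ) δ hroot
  have hrefl : ¬ motive (rootReflection β δ) hmem := fun h => hnot (reflect δ hroot β hβ hneg h)
  exact (corootHeight_lt_corootHeight_rootReflection hroot hβ hneg).not_ge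
    (hmax _ (Finset.mem_filter.2 ⟨hmem, hmem, hrefl⟩))

theorem IsHighestRoot.isDominant (hθ : R.IsHighestRoot θ) : R.IsDominant θ := by
  intro β hβ
  have hroot := R.base_subset hβ
  have hle : (R.coeff (rootReflection β θ) β : ℝ) ≤ R.coeff θ β :=
    Int.cast_le.2 (hθ.2 _ (R.reflection_mem β hroot θ hθ.1) β hβ)
  rw [coeff_rootReflection hθ.1 hβ hβ, if_pos rfl] at hle
  exact (corootPairing_nonneg_iff (inner_self_pos_of_mem hroot)).1 (by linarith)

theorem IsHighestRoot.inner_le_inner_self (hθ : R.IsHighestRoot θ) (hγ : γ ∈ R.Φ) :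
    ⟪γ, θ⟫ ≤ ⟪θ, θ⟫ := by
  rw [real_inner_comm]
  exact hθ.isDominant.inner_le_inner hγ hθ.1 (hθ.2 γ hγ)

theorem IsHighestRoot.inner_self_le_of_isDominant (hθ : R.IsHighestRoot θ) (hγ : γ ∈ R.Φ)
    (hdom : R.IsDominant γ) : ⟪γ, γ⟫ ≤ ⟪γ, θ⟫ :=
  hdom.inner_le_inner hγ hθ.1 (hθ.2 γ hγ)

theorem IsHighestRoot.inner_self_le_inner_self (hθ : R.IsHighestRoot θ) (hγ : γ ∈ R.Φ) :
    ⟪γ, γ⟫ ≤ ⟪θ, θ⟫ := by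
  induction γ, hγ using dominant_induction with
  | dominant γ hγ hdom =>
    exact (hθ.inner_self_le_of_isDominant hγ hdom).trans (hθ.inner_le_inner_self hγ)
  | reflect γ _ β _ _ hrefl => rwa [inner_rootReflection_rootReflection] at hrefl

theorem IsHighestRoot.eq_of_isDominant (hθ : R.IsHighestRoot θ) (hγ : γ ∈ R.Φ)
    (hdom : R.IsDominant γ) (hlong : ⟪γ, γ⟫ = ⟪θ, θ⟫) : γ = θ := by
  have hle := hθ.inner_le_inner_self hγ
  have hge := hθ.inner_self_le_of_isDominant hγ hdom
  rw [← sub_eq_zero, ← inner_self_eq_zero (𝕜 := ℝ), real_inner_sub_sub_self]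
  linarith

theorem corootPairing_eq_neg_one (hγ : γ ∈ R.Φ) (hδ : δ ∈ R.Φ) (hle : ⟪δ, δ⟫ ≤ ⟪γ, γ⟫)
    (hne : γ ≠ -δ) (hneg : ⟪δ, γ⟫ < 0) : corootPairing δ γ = -1 := by
  have hγγ := inner_self_pos_of_mem hγ
  obtain ⟨n, hn⟩ := R.crystallographic δ hδ γ hγ
  have hlt : n < 0 := by
    have := (corootPairing_neg_iff hγγ).2 hneg
    rw [hn] at this
    exact_mod_cast this
  have hgt : -2 < n := by
    have hsum : 0 < ⟪γ + δ, γ + δ⟫ :=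
      real_inner_self_pos.2 fun h => hne (eq_neg_of_add_eq_zero_left h)
    rw [real_inner_add_add_self, real_inner_comm δ γ] at hsum
    have : -2 < corootPairing δ γ := by
      rw [corootPairing, lt_div_iff₀ hγγ]
      linarith
    rw [hn] at this
    exact_mod_cast this
  have hn_eq : n = -1 := by omega
  rw [hn, hn_eq, Int.cast_neg, Int.cast_one]

/-- The set `N_P(γ)` of positive roots `δ` with `⟨δ,γ^∨⟩ = -1` whose squared length satisfies `P`.
For a long simple root `γ` and the trivial condition `P` this is the inversion set `N(y_γ^{-1})`. -/
def negOneRoots (R : RootSystemWithBase V) (P : ℝ → Prop) (γ : V) : Finset V :=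
  R.Pos.filter fun δ => P ⟪δ, δ⟫ ∧ corootPairing δ γ = -1

theorem mem_negOneRoots :
    δ ∈ R.negOneRoots P γ ↔ δ ∈ R.Pos ∧ P ⟪δ, δ⟫ ∧ corootPairing δ γ = -1 :=
  Finset.mem_filter

theorem IsDominant.negOneRoots_eq_empty (hγ : γ ∈ R.Φ) (hdom : R.IsDominant γ) :
    R.negOneRoots P γ = ∅ := by
  refine Finset.eq_empty_of_forall_notMem fun δ hδ => ?_
  obtain ⟨hpos, -, hpair⟩ := mem_negOneRoots.1 hδ
  have hnonneg := hdom.inner_nonneg hpos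
  rw [real_inner_comm, ← corootPairing_nonneg_iff (inner_self_pos_of_mem hγ), hpair] at hnonneg
  norm_num at hnonneg

theorem rootReflection_mem_negOneRoots (hβ : β ∈ R.Δ) (hδ : δ ∈ R.negOneRoots P γ) (hne : δ ≠ β) :
    rootReflection β δ ∈ R.negOneRoots P (rootReflection β γ) := by
  rw [mem_negOneRoots] at hδ ⊢
  rw [inner_rootReflection_rootReflection, corootPairing_rootReflection_rootReflection]
  exact ⟨rootReflection_mem_Pos hβ hδ.1 hne, hδ.2⟩

theorem card_negOneRoots_erase (hβ : β ∈ R.Δ) (hpair : corootPairing β γ = -1) :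
    ((R.negOneRoots P γ).erase β).card = (R.negOneRoots P (rootReflection β γ)).card := by
  have hβ_notMem : β ∉ R.negOneRoots P (rootReflection β γ) := by
    intro hmem
    have h := (mem_negOneRoots.1 hmem).2.2
    rw [corootPairing_rootReflection_right, rootReflection_self, corootPairing_neg_left, hpair] at h
    norm_num at h
  refine Finset.card_nbij' (rootReflection β) (rootReflection β) ?_ ?_
    (fun δ _ => rootReflection_rootReflection β δ) fun δ _ => rootReflection_rootReflection β δ
  · intro δ hδ
    obtain ⟨hne, hmem⟩ := Finset.mem_erase.1 hδ
    exact rootReflection_mem_negOneRoots hβ hmem hne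
  · intro δ hδ
    have hmem := rootReflection_mem_negOneRoots hβ hδ (ne_of_mem_of_not_mem hδ hβ_notMem)
    rw [rootReflection_rootReflection] at hmem
    refine Finset.mem_erase.2 ⟨fun h => ?_, hmem⟩
    have hδ_eq : δ = -β := by rw [← rootReflection_rootReflection β δ, h, rootReflection_self]
    exact neg_notMem_Pos (mem_Pos_of_mem_base hβ) (hδ_eq ▸ (mem_negOneRoots.1 hδ).1)

theorem card_negOneRoots_eq_card_rootReflection_add (P : ℝ → Prop) (hβ : β ∈ R.Δ)
    (hpair : corootPairing β γ = -1) :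
    (R.negOneRoots P γ).card
      = (R.negOneRoots P (rootReflection β γ)).card + if P ⟪β, β⟫ then 1 else 0 := by
  rw [← card_negOneRoots_erase hβ hpair]
  split_ifs with hP
  · exact (Finset.card_erase_add_one
      (mem_negOneRoots.2 ⟨mem_Pos_of_mem_base hβ, hP, hpair⟩)).symm
  · rw [Finset.erase_eq_of_notMem fun h => hP (mem_negOneRoots.1 h).2.1, add_zero]

theorem IsHighestRoot.card_negOneRoots_eq_corootHeight_sub (hθ : R.IsHighestRoot θ)
    (P : ℝ → Prop) (hγ : γ ∈ R.Pos) (hlong : ⟪γ, γ⟫ = ⟪θ, θ⟫) :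
    ((R.negOneRoots P γ).card : ℝ) = R.corootHeight P θ - R.corootHeight P γ := by
  have hroot := (mem_Pos.1 hγ).1
  induction γ, hroot using dominant_induction with
  | dominant γ hroot hdom =>
    rw [hdom.negOneRoots_eq_empty hroot, hθ.eq_of_isDominant hroot hdom hlong, sub_self,
      Finset.card_empty, Nat.cast_zero]
  | reflect γ hroot β hβ hneg ih =>
    have hroot_β := R.base_subset hβ
    have hpair : corootPairing β γ = -1 := by
      refine corootPairing_eq_neg_one hroot hroot_β ?_ ?_ (real_inner_comm γ β ▸ hneg)
      · exact hlong ▸ hθ.inner_self_le_inner_self hroot_β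
      · exact ne_of_mem_of_not_mem hγ (neg_notMem_Pos (mem_Pos_of_mem_base hβ))
    have hne : γ ≠ β := by
      rintro rfl
      exact hneg.not_ge (inner_self_pos_of_mem hroot).le
    have hcard := ih (rootReflection_mem_Pos hβ hγ hne)
      ((inner_rootReflection_rootReflection β γ γ).trans hlong)
    rw [corootHeight_rootReflection P hroot hβ, hpair] at hcard
    rw [card_negOneRoots_eq_card_rootReflection_add P hβ hpair, Nat.cast_add, hcard]
    split_ifs <;> push_cast <;> ring

theorem corootHeight_eq_sum_coeff (hγ : γ ∈ R.Φ) :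
    R.corootHeight (fun x => x = ⟪γ, γ⟫) γ
      = ∑ β ∈ R.Δ.filter fun β => ⟪β, β⟫ = ⟪γ, γ⟫, (R.coeff γ β : ℝ) := by
  refine Finset.sum_congr rfl fun β hβ => ?_
  rw [(Finset.mem_filter.1 hβ).2, div_self (inner_self_pos_of_mem hγ).ne', mul_one]

end RootSystemWithBase

open RootSystemWithBase

theorem card_long_and_short_roots_pairing_neg_one_general
    (R : RootSystemWithBase V) (θ : V) (hθ : R.IsHighestRoot θ)
    (α : V) (hα : α ∈ R.Pos) (hlong : ⟪α, α⟫ = ⟪θ, θ⟫) :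
    (((R.Pos.filter fun γ => ⟪γ, γ⟫ = ⟪θ, θ⟫ ∧ corootPairing γ α = -1).card : ℤ)
        = (∑ β ∈ R.Δ.filter fun β => ⟪β, β⟫ = ⟪θ, θ⟫, R.coeff θ β)
          - ∑ β ∈ R.Δ.filter fun β => ⟪β, β⟫ = ⟪θ, θ⟫, R.coeff α β) ∧
    (((R.Pos.filter fun γ => ⟪γ, γ⟫ ≠ ⟪θ, θ⟫ ∧ corootPairing γ α = -1).card : ℝ)
        = (∑ β ∈ R.Δ.filter fun β => ⟪β, β⟫ ≠ ⟪θ, θ⟫, (R.coeff θ β : ℝ) * (⟪β, β⟫ / ⟪θ, θ⟫))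
          - ∑ β ∈ R.Δ.filter fun β => ⟪β, β⟫ ≠ ⟪θ, θ⟫,
              (R.coeff α β : ℝ) * (⟪β, β⟫ / ⟪θ, θ⟫)) := by
  constructor
  · have h := hθ.card_negOneRoots_eq_corootHeight_sub (fun x => x = ⟪θ, θ⟫) hα hlong
    rw [corootHeight_eq_sum_coeff hθ.1, ← hlong, corootHeight_eq_sum_coeff (mem_Pos.1 hα).1,
      hlong, negOneRoots] at h
    exact_mod_cast h
  · have h := hθ.card_negOneRoots_eq_corootHeight_sub (fun x => x ≠ ⟪θ, θ⟫) hα hlong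
    simp only [negOneRoots, corootHeight, hlong] at h
    convert h

/-- For a finite, reduced, irreducible, crystallographic root
system `Φ` with base `Δ`, positive roots `Φ⁺` and highest root
`θ = Σ_{β∈Δ} m_β·β`, and for every long simple root `α ∈ Δ`:
(i) the number of long positive roots `γ` with `⟨γ,α^∨⟩ = −1` equals
`(Σ_{β∈Δ long} m_β) − 1`, and
(ii) the number of short positive roots `γ` with `⟨γ,α^∨⟩ = −1` equals
`Σ_{β∈Δ short} m_β·(β,β)/(θ,θ)`. -/
theorem card_long_and_short_roots_pairing_neg_one
    (R : RootSystemWithBase V) (hirr : R.Irreducible)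
    (θ : V) (hθ : R.IsHighestRoot θ)
    (α : V) (hα : α ∈ R.Δ) (hlong : ⟪α, α⟫ = ⟪θ, θ⟫) :
    (((R.Pos.filter fun γ => ⟪γ, γ⟫ = ⟪θ, θ⟫ ∧ corootPairing γ α = -1).card : ℤ)
        = (∑ β ∈ R.Δ.filter fun β => ⟪β, β⟫ = ⟪θ, θ⟫, R.coeff θ β) - 1) ∧
    (((R.Pos.filter fun γ => ⟪γ, γ⟫ ≠ ⟪θ, θ⟫ ∧ corootPairing γ α = -1).card : ℝ)
        = ∑ β ∈ R.Δ.filter fun β => ⟪β, β⟫ ≠ ⟪θ, θ⟫,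
            (R.coeff θ β : ℝ) * (⟪β, β⟫ / ⟪θ, θ⟫)) := by
  simpa only [sum_filter_coeff_base hα, sum_filter_coeff_base_mul hα, hlong, ne_eq, not_true,
    if_true, if_false, sub_zero] using
    card_long_and_short_roots_pairing_neg_one_general R θ hθ α (mem_Pos_of_mem_base hα) hlong

end
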